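/- arXiv:2405.02776 — 2 statements merged into one kernel-verified Lean document; each statement's English description precedes it below -/
import Mathlib

section
/- The infinite series identity 5π/(4√3) = Σ_{k=0}^{∞} (1/4)^k · [(1/3)_k (1)_k (5/3)_k] / [(7/6)_k (3/2)_k (11/6)_k] · (3k + 2) holds, where the sum is over natural numbers k and all quantities are real numbers. -/
noncomputable def risingFactorial (a : ℝ) (k : ℕ) : ℝ := ∏ i ∈ Finset.range k, (a + i)

/-- The Wallis-type integral. -/
noncomputable def wallisJ (n : ℕ) : ℝ := ∫ s in (0:ℝ)..1, (1 - s ^ 2) ^ n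

lemma wallisJ_zero : wallisJ 0 = 1 := by simp [wallisJ]

lemma wallisJ_succ (n : ℕ) : wallisJ (n + 1) = (2 * n + 2) / (2 * n + 3) * wallisJ n := by
  have h : ∫ s in (0:ℝ)..1, ((2 * n + 3) * (1 - s ^ 2) ^ (n + 1) - (2 * n + 2) * (1 - s ^ 2) ^ n)
      = 1 * (1 - 1 ^ 2) ^ (n + 1) - 0 * (1 - 0 ^ 2) ^ (n + 1) := by
    apply intervalIntegral.integral_eq_sub_of_hasDerivAt
      (f := fun s : ℝ => s * (1 - s ^ 2) ^ (n + 1))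
    · intro x _
      have h1 : HasDerivAt (fun s : ℝ => 1 - s ^ 2) (-(2 * x)) x := by
        simpa using (hasDerivAt_pow 2 x).const_sub 1
      have h2 := (hasDerivAt_id x).mul (h1.pow (n + 1))
      refine h2.congr_deriv ?_
      simp
      ring
    · apply Continuous.intervalIntegrable
      fun_prop
  rw [intervalIntegral.integral_sub (Continuous.intervalIntegrable (by fun_prop) _ _)
    (Continuous.intervalIntegrable (by fun_prop) _ _),
    intervalIntegral.integral_const_mul, intervalIntegral.integral_const_mul] at h
  change (2 * n + 3) * wallisJ (n + 1) - (2 * n + 2) * wallisJ n = _ at h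
  have : (2 * n + 3 : ℝ) ≠ 0 := by positivity
  field_simp
  simp at h
  linarith

lemma rf_succ (a : ℝ) (k : ℕ) : risingFactorial a (k + 1) = risingFactorial a k * (a + k) := by
  simp [risingFactorial, Finset.prod_range_succ]

lemma rf_pos (a : ℝ) (ha : 0 < a) (k : ℕ) : 0 < risingFactorial a k :=
  Finset.prod_pos fun i _ => by positivity

lemma ratio_eq (k : ℕ) :
    (risingFactorial (1/3) k * risingFactorial (1) k * risingFactorial (5/3) k) /
        (risingFactorial (7/6) k * risingFactorial (3/2) k * risingFactorial (11/6) k)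
      = wallisJ (3 * k) * (15 * (3 * k + 2)) / (2 * (6 * k + 3) * (6 * k + 5)) := by
  induction k with
  | zero => simp [risingFactorial, wallisJ_zero]; norm_num
  | succ k ih =>
    have e : 3 * (k + 1) = 3 * k + 1 + 1 + 1 := by ring
    rw [e, wallisJ_succ, wallisJ_succ, wallisJ_succ]
    simp only [rf_succ]
    have a1 := rf_pos (7/6) (by norm_num) k
    have a2 := rf_pos (3/2) (by norm_num) k
    have a3 := rf_pos (11/6) (by norm_num) k
    have : ∀ a b c d e f x y z u v w : ℝ, (a * x * (b * y) * (c * z)) / (d * u * (e * v) * (f * w))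
        = (a * b * c) / (d * e * f) * ((x * y * z) / (u * v * w)) := by
      intros; rw [div_mul_div_comm]; congr 1 <;> ring
    rw [this, ih]
    push_cast
    field_simp
    ring

lemma term_eq (k : ℕ) :
    (1/4 : ℝ) ^ k * (risingFactorial (1/3) k * risingFactorial (1) k * risingFactorial (5/3) k) /
        (risingFactorial (7/6) k * risingFactorial (3/2) k * risingFactorial (11/6) k) * (3 * (k:ℝ) + 2)
      = ∫ s in (0:ℝ)..1, (5/2 * (1 - (1 - s^2)/2 + (1-s^2)^2/4)) * ((1 - s^2)^3/4)^k := by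
  have h : ∀ s : ℝ, (5/2 * (1 - (1 - s^2)/2 + (1-s^2)^2/4)) * ((1 - s^2)^3/4)^k
      = (1/4)^k * (5/2) * (1 - s^2)^(3*k) - (1/4)^k * (5/4) * (1 - s^2)^(3*k+1)
        + (1/4)^k * (5/8) * (1 - s^2)^(3*k+1+1) := by
    intro s
    rw [div_pow, ← pow_mul, one_div, inv_pow]
    field_simp
    ring
  simp only [h]
  rw [intervalIntegral.integral_add (Continuous.intervalIntegrable (by fun_prop) _ _)
    (Continuous.intervalIntegrable (by fun_prop) _ _),
    intervalIntegral.integral_sub (Continuous.intervalIntegrable (by fun_prop) _ _)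
    (Continuous.intervalIntegrable (by fun_prop) _ _),
    intervalIntegral.integral_const_mul, intervalIntegral.integral_const_mul,
    intervalIntegral.integral_const_mul]
  change _ = (1/4)^k * (5/2) * wallisJ (3*k) - (1/4)^k * (5/4) * wallisJ (3*k+1)
        + (1/4)^k * (5/8) * wallisJ (3*k+1+1)
  rw [mul_div_assoc, ratio_eq, wallisJ_succ (3*k+1), wallisJ_succ (3*k)]
  push_cast
  field_simp
  ring

lemma den_pos (s : ℝ) (h0 : 0 ≤ s) (h1 : s ≤ 1) : 0 < 3 * s - s^3 + √3 * (1 - s^2) := by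
  have h3 : 0 < √3 := by positivity
  have hs2 : 0 ≤ 1 - s^2 := by nlinarith
  rcases h0.eq_or_lt with rfl | h0
  · simp
  · have : 0 < 3 * s - s^3 := by nlinarith
    positivity

lemma integral_val : ∫ s in (0:ℝ)..1, 5/2 * ((s^4 + 3) / (s^6 - 3*s^4 + 3*s^2 + 3))
    = 5 * Real.pi / (4 * √3) := by
  have h3 : 0 < √3 := by positivity
  have h33 : √3 ^ 2 = 3 := Real.sq_sqrt (by norm_num)
  have hden : ∀ s : ℝ, 0 < s^6 - 3*s^4 + 3*s^2 + 3 := by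
    intro s
    nlinarith [sq_nonneg (3*s - s^3), sq_nonneg (1 - s^2), sq_nonneg s, sq_nonneg (s^2),
      sq_nonneg (s*(s^2-3/2))]
  rw [intervalIntegral.integral_eq_sub_of_hasDerivAt
    (f := fun s : ℝ => 5/2 / √3 * Real.arctan ((3*s - s^3 - √3 * (1 - s^2)) / (3*s - s^3 + √3 * (1 - s^2))))]
  · have e1 : ((3*1 - 1^3 - √3 * (1 - 1^2)) / (3*1 - 1^3 + √3 * (1 - 1^2)) : ℝ) = 1 := by norm_num
    have e2 : ((3*0 - 0^3 - √3 * (1 - 0^2)) / (3*0 - 0^3 + √3 * (1 - 0^2)) : ℝ) = -1 := by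
      field_simp; norm_num
    simp only [e1, e2, Real.arctan_neg, Real.arctan_one]
    field_simp
    norm_num
  · intro x hx
    rw [Set.uIcc_of_le (by norm_num)] at hx
    have hd := den_pos x hx.1 hx.2
    have p : HasDerivAt (fun s : ℝ => 3*s - s^3) (3 - 3*x^2) x := by
      refine (((hasDerivAt_id x).const_mul 3).sub (hasDerivAt_pow 3 x)).congr_deriv ?_
      simp
    have q : HasDerivAt (fun s : ℝ => √3 * (1 - s^2)) (√3 * (-(2*x))) x := by
      simpa using ((hasDerivAt_pow 2 x).const_sub 1).const_mul (√3)
    have hh := (((p.sub q).div (p.add q) hd.ne').arctan).const_mul (5/2/√3)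
    refine hh.congr_deriv ?_
    simp only [Pi.sub_apply, Pi.add_apply, Pi.div_apply]
    have hD := hden x
    have key : (3*x - x^3 + √3 * (1 - x^2))^2 + (3*x - x^3 - √3 * (1 - x^2))^2
        = 2 * (x^6 - 3*x^4 + 3*x^2 + 3) := by
      linear_combination (2 * (1-x^2)^2) * h33
    have key2 : 1 + ((3*x - x^3 - √3 * (1 - x^2)) / (3*x - x^3 + √3 * (1 - x^2)))^2
        = 2 * (x^6 - 3*x^4 + 3*x^2 + 3) / (3*x - x^3 + √3 * (1 - x^2))^2 := by
      rw [← key, div_pow, add_div, div_self (pow_ne_zero 2 hd.ne')]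
    have key3 : (3 - 3 * x ^ 2 - √3 * -(2 * x)) * (3*x - x^3 + √3 * (1 - x^2)) -
        (3*x - x^3 - √3 * (1 - x^2)) * (3 - 3 * x ^ 2 + √3 * -(2 * x)) = 2 * √3 * (x^4 + 3) := by
      ring
    rw [key2, key3]
    generalize x^6 - 3*x^4 + 3*x^2 + 3 = A at *
    generalize 3*x - x^3 + √3 * (1 - x^2) = B at *
    field_simp
  · apply Continuous.intervalIntegrable
    have := fun s => (hden s).ne'
    fun_prop (disch := assumption)

theorem stmt_0 :
    5 * Real.pi / (4 * Real.sqrt 3) =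
      ∑' k : ℕ, (1/4 : ℝ) ^ k * (risingFactorial (1/3) k * risingFactorial (1) k * risingFactorial (5/3) k) /
        (risingFactorial (7/6) k * risingFactorial (3/2) k * risingFactorial (11/6) k) * (3 * (k:ℝ) + 2) := by
  simp only [term_eq]
  symm
  apply HasSum.tsum_eq
  rw [← integral_val]
  have hgeo : Summable (fun k : ℕ => (5/2 * 2 : ℝ) * (1/4)^k) :=
    (summable_geometric_of_lt_one (by norm_num) (by norm_num)).mul_left _
  have hb : ∀ t : ℝ, t ∈ Set.uIoc (0:ℝ) 1 → 0 ≤ 1 - t^2 ∧ 1 - t^2 ≤ 1 := by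
    intro t ht
    rw [Set.uIoc_of_le (by norm_num)] at ht
    constructor <;> nlinarith [ht.1, ht.2]
  apply intervalIntegral.hasSum_integral_of_dominated_convergence
    (fun k _ => (5/2 * 2 : ℝ) * (1/4)^k)
  · intro n
    exact Continuous.aestronglyMeasurable (by fun_prop)
  · intro n
    refine Filter.Eventually.of_forall fun t ht => ?_
    obtain ⟨u0, u1⟩ := hb t ht
    generalize 1 - t^2 = u at *
    have hu3 : u^3 ≤ 1 := pow_le_one₀ u0 u1
    have hp : 0 ≤ 5/2 * (1 - u/2 + u^2/4) := by nlinarith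
    rw [Real.norm_of_nonneg (by positivity)]
    apply mul_le_mul
    · nlinarith
    · exact pow_le_pow_left₀ (by positivity) (by linarith) n
    · positivity
    · norm_num
  · exact Filter.Eventually.of_forall fun t _ => hgeo
  · simp
  · refine Filter.Eventually.of_forall fun t ht => ?_
    obtain ⟨u0, u1⟩ := hb t ht
    have hu3 : (1 - t^2)^3 ≤ 1 := pow_le_one₀ u0 u1
    have h := (hasSum_geometric_of_lt_one (r := (1 - t^2)^3/4) (by positivity) (by linarith)).mul_left
      (5/2 * (1 - (1 - t^2)/2 + (1-t^2)^2/4))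
    have h1 : (t^6 - 3*t^4 + 3*t^2 + 3) = 4 * (1 - (1 - t^2)^3/4) := by ring
    have h2 : 1 - (1 - t^2)^3/4 ≠ 0 := by linarith
    have h4 : 5/2 * ((t^4 + 3) / (t^6 - 3*t^4 + 3*t^2 + 3))
        = 5/2 * (1 - (1 - t^2)/2 + (1-t^2)^2/4) * (1 - (1 - t^2)^3/4)⁻¹ := by
      rw [h1]
      generalize 1 - (1 - t^2)^3/4 = A at *
      field_simp
      ring
    rw [h4]
    exact h
end

section
/- The infinite series identity 16√3/3 = Σ_{k=0}^{∞} (1/4)^k · [(1/2)_k (5/6)_k (7/6)_k] / [(1)_k (4/3)_k (4/3)_k] · (18k + 7) holds, where the sum is over natural numbers k and all quantities are real numbers. -/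
theorem aux_rf_succ (a : ℝ) (k : ℕ) :
    risingFactorial a (k+1) = risingFactorial a k * (a + k) := by
  simp [risingFactorial, Finset.prod_range_succ]

theorem aux_rf_zero (a : ℝ) : risingFactorial a 0 = 1 := by
  simp [risingFactorial]

theorem aux_rf_succ' (a : ℝ) (k : ℕ) :
    risingFactorial a (k+1) = a * risingFactorial (a+1) k := by
  induction k with
  | zero => simp [risingFactorial]
  | succ k ih => rw [aux_rf_succ, ih, aux_rf_succ]; push_cast; ring

theorem aux_rf_pos {a : ℝ} (ha : 0 < a) (k : ℕ) : 0 < risingFactorial a k :=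
  Finset.prod_pos fun i _ => by positivity

noncomputable def auxP (x : ℝ) (k : ℕ) : ℝ :=
  (1/4 : ℝ)^k * (risingFactorial (7/6) k * risingFactorial (1/2) k ^ 2 * risingFactorial (-x) k) /
    (risingFactorial 1 k * risingFactorial (4/3) k ^ 2 * risingFactorial (13/6 + 2*x) k)

noncomputable def auxR (x : ℝ) : ℝ := (13/12 + x) * (19/12 + x) / (4/3 + x)^2

theorem auxP_zero (x : ℝ) : auxP x 0 = 1 := by simp [auxP, aux_rf_zero]

theorem auxP_succ (x : ℝ) (hx : -5/6 ≤ x) (k : ℕ) :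
    auxP x (k+1) = auxP x k * ((1/4) * ((7/6 + k) * (1/2 + k)^2 * (-x + k)) /
      ((1 + k) * (4/3 + k)^2 * (13/6 + 2*x + k))) := by
  have hD : 0 < 13/6 + 2*x := by linarith
  have h1 := aux_rf_pos one_pos k
  have h2 := aux_rf_pos (show (0:ℝ) < 4/3 by norm_num) k
  have h3 := aux_rf_pos hD k
  have h4 : 0 < 13/6 + 2*x + k := by positivity
  simp only [auxP, aux_rf_succ, pow_succ]
  field_simp

theorem auxP_shift (x : ℝ) (hx : -5/6 ≤ x) (k : ℕ) :
    auxP (x+1) (k+1) = auxP x k * ((1/4) * ((7/6 + k) * (1/2 + k)^2 * (-x - 1)) /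
      ((1 + k) * (4/3 + k)^2) * ((13/6 + 2*x) * (13/6 + 2*x + 1) /
        ((13/6 + 2*x + k) * (13/6 + 2*x + k + 1) * (13/6 + 2*x + k + 2)))) := by
  have hD : 0 < 13/6 + 2*x := by linarith
  have h1 := aux_rf_pos one_pos k
  have h2 := aux_rf_pos (show (0:ℝ) < 4/3 by norm_num) k
  have h3 := aux_rf_pos hD k
  have e1 : risingFactorial (-(x+1)) (k+1) = (-x-1) * risingFactorial (-x) k := by
    rw [aux_rf_succ']; ring_nf
  have e2 : risingFactorial (13/6 + 2*(x+1)) (k+1) = risingFactorial (13/6 + 2*x) k *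
      ((13/6 + 2*x + k) * (13/6 + 2*x + k + 1) * (13/6 + 2*x + k + 2)) /
        ((13/6 + 2*x) * (13/6 + 2*x + 1)) := by
    have a1 : risingFactorial (13/6 + 2*x) (k+3) =
        (13/6 + 2*x) * ((13/6 + 2*x + 1) * risingFactorial (13/6 + 2*(x+1)) (k+1)) := by
      rw [aux_rf_succ', aux_rf_succ']; ring_nf
    rw [aux_rf_succ, aux_rf_succ, aux_rf_succ] at a1
    rw [eq_div_iff (by positivity)]
    push_cast at a1
    linear_combination -a1
  simp only [auxP, e1, e2]
  simp only [aux_rf_succ, pow_succ (1/4:ℝ) k]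
  have h4 : 13/6 + 2*x + k ≠ 0 := by positivity
  have h5 : 13/6 + 2*x + k + 1 ≠ 0 := by positivity
  have h6 : 13/6 + 2*x + k + 2 ≠ 0 := by positivity
  have h7 : 13/6 + 2*x ≠ 0 := by positivity
  have h8 : 13/6 + 2*x + 1 ≠ 0 := by positivity
  have h9 : (4/3 + (k:ℝ)) ≠ 0 := by positivity
  have h10 : (1 + (k:ℝ)) ≠ 0 := by positivity
  generalize 13/6 + 2*x + k + 1 = d1 at *
  generalize 13/6 + 2*x + k + 2 = d2 at *
  generalize 13/6 + 2*x + k = d0 at *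
  generalize 13/6 + 2*x + 1 = D1 at *
  generalize risingFactorial (13/6 + 2*x) k = w at *
  generalize 13/6 + 2*x = D at *
  generalize 4/3 + (k:ℝ) = u at *
  generalize 1 + (k:ℝ) = u' at *
  generalize risingFactorial 1 k = w1 at *
  generalize risingFactorial (4/3) k = w2 at *
  generalize risingFactorial (7/6) k = w3 at *
  generalize risingFactorial (1/2) k = w4 at *
  generalize risingFactorial (-x) k = w5 at *
  generalize 7/6 + (k:ℝ) = v at *
  generalize 1/2 + (k:ℝ) = v' at *
  generalize (1/4 : ℝ)^k = q at *
  field_simp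

noncomputable def auxC (x : ℝ) (k : ℕ) : ℝ :=
  6 * auxR x * ((k + 7/6) * (k+1/2)^2) / ((13/6 + 2*x + k) * (13/6 + 2*x + k + 1))

theorem auxR_eq (x : ℝ) : auxR x = 4 * (13/6 + 2*x) * (13/6 + 2*x + 1) / (2 * (13/6 + 2*x) + 1)^2 := by
  unfold auxR
  have e : 2 * (13/6 + 2*x) + 1 = 4 * (4/3 + x) := by ring
  rw [e, mul_pow, show 4 * (13/6 + 2*x) * (13/6 + 2*x + 1) = 4^2 * ((13/12 + x) * (19/12 + x)) by ring,
    mul_div_mul_left _ _ (by norm_num)]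

theorem aux_alg (D k p : ℝ) (hD : 0 < D) (hk : 0 ≤ k) :
    6 * (4 * D * (D+1) / (2*D+1)^2) * ((k + 7/6) * (k+1/2)^2) / ((D + k) * (D + k + 1)) * p +
    (p * ((1/4) * ((7/6 + k) * (1/2 + k)^2 * (1/12 - D/2)) /
      ((1 + k) * (4/3 + k)^2) * (D * (D + 1) / ((D + k) * (D + k + 1) * (D + k + 2)))) -
      4 * D * (D+1) / (2*D+1)^2 * (p * ((1/4) * ((7/6 + k) * (1/2 + k)^2 * (k + 13/12 - D/2)) /
      ((1 + k) * (4/3 + k)^2 * (D + k))))) * (18 * (k + 1) + 7) =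
    6 * (4 * D * (D+1) / (2*D+1)^2) * ((k + 1 + 7/6) * (k + 1 +1/2)^2) /
      ((D + (k + 1)) * (D + (k + 1) + 1)) * (p * ((1/4) * ((7/6 + k) * (1/2 + k)^2 *
        (k + 13/12 - D/2)) / ((1 + k) * (4/3 + k)^2 * (D + k)))) := by
  have e1 : D + (k + 1) = D + k + 1 := by ring
  have e2 : D + k + 1 + 1 = D + k + 2 := by ring
  have e3 : 4/3 + k = (4 + 3 * k) / 3 := by ring
  rw [e1, e2, e3]
  have h1 : D + k ≠ 0 := by positivity
  have h2 : D + k + 1 ≠ 0 := by positivity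
  have h3 : D + k + 2 ≠ 0 := by positivity
  have h4 : 4 + 3 * k ≠ 0 := by positivity
  have h5 : 1 + k ≠ 0 := by positivity
  have h6 : 2 * D + 1 ≠ 0 := by positivity
  field_simp
  ring

theorem aux_partial (x : ℝ) (hx : -5/6 ≤ x) (K : ℕ) :
    ∑ k ∈ Finset.range (K+1), (auxP (x+1) k - auxR x * auxP x k) * (18 * (k:ℝ) + 7)
      = auxC x K * auxP x K := by
  have hD : 0 < 13/6 + 2*x := by linarith
  have hD' : 0 < 4/3 + x := by linarith
  induction K with
  | zero =>
    simp only [zero_add, Finset.sum_range_one, auxP_zero, auxC, auxR_eq, Nat.cast_zero]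
    generalize 13/6 + 2*x = D at *
    have : 2 * D + 1 ≠ 0 := by positivity
    have : D + 1 ≠ 0 := by positivity
    rw [add_zero]
    field_simp
    ring
  | succ K ih =>
    rw [Finset.sum_range_succ, ih, auxP_shift x hx, auxP_succ x hx]
    simp only [auxC, auxR_eq]
    push_cast
    have e1 : -x + K = K + 13/12 - (13/6 + 2*x)/2 := by ring
    have e2 : -x - 1 = 1/12 - (13/6 + 2*x)/2 := by ring
    rw [e1, e2]
    exact aux_alg _ _ _ hD (Nat.cast_nonneg K)

theorem auxP_bound (x : ℝ) (hx : -5/6 ≤ x) (k : ℕ) : |auxP x k| ≤ (1/2)^k := by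
  induction k with
  | zero => simp [auxP_zero]
  | succ k ih =>
    rw [auxP_succ x hx, abs_mul, pow_succ (1/2:ℝ) k]
    have hk : (0:ℝ) ≤ k := Nat.cast_nonneg k
    have h4 : 0 < 13/6 + 2*x + k := by linarith
    have hq : |-x + (k:ℝ)| ≤ 5/3 * (13/6 + 2*x + k) := by
      rw [abs_le]; constructor <;> linarith
    refine mul_le_mul ih ?_ (abs_nonneg _) (by positivity)
    rw [abs_div, abs_mul, abs_mul, abs_of_pos (show (0:ℝ) < 1/4 by norm_num),
      abs_of_pos (show (0:ℝ) < (7/6 + k) * (1/2 + k)^2 by positivity),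
      abs_of_pos (show (0:ℝ) < (1 + k) * (4/3 + k)^2 * (13/6 + 2*x + k) by positivity),
      div_le_iff₀ (by positivity)]
    have b1 : (7/6 + (k:ℝ)) * (1/2 + k)^2 ≤ 7/6 * ((1 + k) * (4/3+k)^2) := by
      have : (1/2 + (k:ℝ))^2 ≤ (4/3+k)^2 := by
        apply pow_le_pow_left₀ <;> linarith
      have h : 7/6 + (k:ℝ) ≤ 7/6 * (1+k) := by linarith
      calc _ ≤ (7/6 * (1+(k:ℝ))) * (4/3+k)^2 := by gcongr
        _ = _ := by ring
    calc 1/4 * ((7/6 + (k:ℝ)) * (1/2 + k)^2 * |-x + (k:ℝ)|)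
        ≤ 1/4 * (7/6 * ((1 + k) * (4/3+k)^2) * (5/3 * (13/6 + 2*x + k))) := by gcongr
      _ ≤ _ := by
        have : 0 ≤ (1 + (k:ℝ)) * (4/3 + k)^2 * (13/6 + 2*x + k) := by positivity
        linarith

theorem aux_summable_bd : Summable (fun k : ℕ => (1/2:ℝ)^k * (18 * (k:ℝ) + 7)) := by
  have h1 := summable_pow_mul_geometric_of_norm_lt_one 1 (r := (1/2:ℝ)) (by norm_num)
  have h0 := summable_geometric_of_norm_lt_one (x := (1/2:ℝ)) (by norm_num)
  refine ((h1.mul_left 18).add (h0.mul_left 7)).congr ?_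
  intro k; ring

theorem aux_norm_bd (x : ℝ) (hx : -5/6 ≤ x) (k : ℕ) :
    ‖auxP x k * (18 * (k:ℝ) + 7)‖ ≤ (1/2:ℝ)^k * (18 * (k:ℝ) + 7) := by
  rw [Real.norm_eq_abs, abs_mul, abs_of_pos (show (0:ℝ) < 18 * (k:ℝ) + 7 by positivity)]
  gcongr
  exact auxP_bound x hx k

theorem aux_summable (x : ℝ) (hx : -5/6 ≤ x) : Summable (fun k : ℕ => auxP x k * (18 * (k:ℝ) + 7)) :=
  Summable.of_norm_bounded aux_summable_bd (aux_norm_bd x hx)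

noncomputable def auxS (x : ℝ) : ℝ := ∑' k : ℕ, auxP x k * (18 * (k:ℝ) + 7)

open Filter Topology in
theorem auxS_succ (x : ℝ) (hx : -5/6 ≤ x) : auxS (x+1) = auxR x * auxS x := by
  have s1 := (aux_summable (x+1) (by linarith)).hasSum
  have s0 := (aux_summable x hx).hasSum
  have s := (s1.sub (s0.mul_left (auxR x))).tendsto_sum_nat
  have s' := (tendsto_add_atTop_iff_nat 1).2 s
  have hD' : 0 < 4/3 + x := by linarith
  have hR : 0 ≤ auxR x := by
    have : 0 < 13/12 + x := by linarith
    have : 0 < 19/12 + x := by linarith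
    unfold auxR; positivity
  have z : Tendsto (fun K : ℕ => auxC x K * auxP x K) atTop (𝓝 0) := by
    have t := (aux_summable_bd.mul_left (6 * auxR x)).tendsto_atTop_zero
    refine squeeze_zero_norm ?_ t
    intro k
    have hk : (0:ℝ) ≤ k := Nat.cast_nonneg k
    have h4 : 0 < 13/6 + 2*x + k := by linarith
    rw [Real.norm_eq_abs, abs_mul]
    have hc : |auxC x k| ≤ 6 * auxR x * (18 * (k:ℝ) + 7) := by
      unfold auxC
      rw [abs_of_nonneg (by positivity), div_le_iff₀ (by positivity), mul_assoc (6 * auxR x)]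
      have : ((k:ℝ)+1/2)^2 ≤ (13/6 + 2*x + k) * (13/6 + 2*x + k + 1) := by
        rw [sq]; apply mul_le_mul <;> linarith
      have : (k:ℝ) + 7/6 ≤ 18 * k + 7 := by linarith
      gcongr
    calc _ ≤ (6 * auxR x * (18 * (k:ℝ) + 7)) * (1/2)^k := by
          gcongr
          exact auxP_bound x hx k
      _ = _ := by ring
  have e := tendsto_nhds_unique s' (z.congr fun K => by
    rw [← aux_partial x hx K]
    refine Finset.sum_congr rfl fun k _ => ?_
    ring)
  unfold auxS
  linarith

theorem auxS_add (x : ℝ) (hx : -5/6 ≤ x) (N : ℕ) :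
    auxS (x + N) = auxS x * (risingFactorial (13/12 + x) N * risingFactorial (19/12 + x) N /
      risingFactorial (4/3 + x) N ^ 2) := by
  induction N with
  | zero => simp [aux_rf_zero]
  | succ N ih =>
    have hN : (0:ℝ) ≤ N := Nat.cast_nonneg N
    push_cast
    rw [← add_assoc, auxS_succ _ (by linarith), ih]
    simp only [aux_rf_succ, auxR]
    have h : 0 < 4/3 + x := by linarith
    have := aux_rf_pos h N
    simp only [← add_assoc]
    have : 4/3 + x + N ≠ 0 := by positivity
    generalize 4/3 + x + N = u at *
    generalize risingFactorial (4/3 + x) N = w at *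
    generalize risingFactorial (13/12 + x) N = w1 at *
    generalize risingFactorial (19/12 + x) N = w2 at *
    field_simp

noncomputable def auxQ (k : ℕ) : ℝ :=
  (1/4 : ℝ)^k * (risingFactorial (7/6) k * risingFactorial (1/2) k ^ 2) /
    (risingFactorial 1 k * risingFactorial (4/3) k ^ 2) * (-1/2)^k

open Filter Topology in
theorem auxP_tendsto (k : ℕ) : Tendsto (fun x : ℝ => auxP x k) atTop (𝓝 (auxQ k)) := by
  have h : ∀ i : ℕ, Tendsto (fun x : ℝ => (-x + i) / (13/6 + 2*x + i)) atTop (𝓝 (-1/2)) := by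
    intro i
    have e : Tendsto (fun x : ℝ => (-1 + (i:ℝ) * x⁻¹) / (2 + (13/6 + (i:ℝ)) * x⁻¹)) atTop
        (𝓝 ((-1 + (i:ℝ) * 0) / (2 + (13/6 + (i:ℝ)) * 0))) := by
      refine Tendsto.div ?_ ?_ (by norm_num)
      · exact tendsto_const_nhds.add (tendsto_const_nhds.mul tendsto_inv_atTop_zero)
      · exact tendsto_const_nhds.add (tendsto_const_nhds.mul tendsto_inv_atTop_zero)
    have e2 : (-1 + (i:ℝ) * 0) / (2 + (13/6 + (i:ℝ)) * 0) = -1/2 := by ring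
    rw [e2] at e
    refine e.congr' ?_
    filter_upwards [eventually_gt_atTop 0] with x hx
    have : 13/6 + 2*x + i ≠ 0 := by positivity
    have : 2 + (13/6 + (i:ℝ)) * x⁻¹ ≠ 0 := by positivity
    rw [div_eq_div_iff (by assumption) (by assumption)]
    field_simp
    ring
  have hp : Tendsto (fun x : ℝ => ∏ i ∈ Finset.range k, ((-x + i) / (13/6 + 2*x + i))) atTop
      (𝓝 (∏ i ∈ Finset.range k, (-1/2 : ℝ))) := tendsto_finsetProd _ fun i _ => h i
  rw [Finset.prod_const, Finset.card_range] at hp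
  refine (hp.const_mul _).congr ?_
  intro x
  rw [Finset.prod_div_distrib]
  simp only [auxP, risingFactorial]
  rw [div_mul_div_comm]
  ring_nf

open Filter Topology in
theorem auxS_tendsto (x : ℝ) (hx : -5/6 ≤ x) :
    Tendsto (fun N : ℕ => auxS (x + (N+1 : ℕ))) atTop (𝓝 (∑' k : ℕ, auxQ k * (18 * (k:ℝ) + 7))) := by
  unfold auxS
  refine tendsto_tsum_of_dominated_convergence aux_summable_bd ?_ ?_
  · intro k
    have t : Tendsto (fun N : ℕ => x + ((N+1 : ℕ) : ℝ)) atTop atTop :=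
      tendsto_atTop_add_const_left _ _
        (tendsto_natCast_atTop_atTop.comp (tendsto_add_atTop_nat 1))
    exact Tendsto.mul_const _ ((auxP_tendsto k).comp t)
  · refine Eventually.of_forall fun N k => aux_norm_bd _ ?_ k
    have : (0:ℝ) ≤ ((N+1:ℕ):ℝ) := Nat.cast_nonneg _
    linarith

open Filter Topology in
theorem aux_gamma_tendsto (a b c : ℝ) (ha : 0 < a) (hb : 0 < b) (hc : 0 < c) (h : a + b = 2 * c) :
    Tendsto (fun N : ℕ => risingFactorial a (N+1) * risingFactorial b (N+1) /
      risingFactorial c (N+1) ^ 2) atTop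
      (𝓝 (Real.Gamma c ^ 2 / (Real.Gamma a * Real.Gamma b))) := by
  have t := ((Real.GammaSeq_tendsto_Gamma c).pow 2).div
    ((Real.GammaSeq_tendsto_Gamma a).mul (Real.GammaSeq_tendsto_Gamma b))
    (mul_pos (Real.Gamma_pos_of_pos ha) (Real.Gamma_pos_of_pos hb)).ne'
  refine t.congr' ?_
  filter_upwards [eventually_gt_atTop 0] with N hN
  have hN' : (0:ℝ) < N := by exact_mod_cast hN
  have key : (N:ℝ)^a * (N:ℝ)^b = ((N:ℝ)^c)^2 := by
    rw [← Real.rpow_add hN', h, sq, ← Real.rpow_add hN']; ring_nf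
  have e : ∀ s : ℝ, Real.GammaSeq s N = (N:ℝ)^s * (N.factorial : ℝ) / risingFactorial s (N+1) :=
    fun s => rfl
  have h1 := aux_rf_pos ha (N+1)
  have h2 := aux_rf_pos hb (N+1)
  have h3 := aux_rf_pos hc (N+1)
  have hf : (0:ℝ) < N.factorial := by exact_mod_cast N.factorial_pos
  have g1 := Real.rpow_pos_of_pos hN' a
  have g2 := Real.rpow_pos_of_pos hN' b
  have g3 := Real.rpow_pos_of_pos hN' c
  simp only [Pi.div_apply, Pi.pow_apply, Pi.mul_apply, e]
  have : (N:ℝ)^a = ((N:ℝ)^c)^2 / (N:ℝ)^b := by rw [← key]; field_simp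
  rw [this]
  field_simp

theorem auxS_zero : auxS 0 = 7 := by
  unfold auxS
  rw [tsum_eq_single 0]
  · simp [auxP_zero]
  · intro k hk
    obtain ⟨m, rfl⟩ := Nat.exists_eq_succ_of_ne_zero hk
    simp [auxP, Nat.succ_eq_add_one, aux_rf_succ']

theorem aux_L (x : ℝ) (hx : -5/6 ≤ x) : ∑' k : ℕ, auxQ k * (18 * (k:ℝ) + 7) =
    auxS x * (Real.Gamma (4/3 + x) ^ 2 / (Real.Gamma (13/12 + x) * Real.Gamma (19/12 + x))) := by
  have t := (aux_gamma_tendsto (13/12 + x) (19/12 + x) (4/3 + x) (by linarith) (by linarith)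
    (by linarith) (by ring)).const_mul (auxS x)
  refine tendsto_nhds_unique (auxS_tendsto x hx) (t.congr fun N => ?_)
  rw [auxS_add x hx]

theorem aux_main : auxS (-5/6) = 16 * Real.sqrt 3 / 3 := by
  have h := aux_L (-5/6) le_rfl
  rw [aux_L 0 (by norm_num), auxS_zero] at h
  norm_num at h
  have d1 := Real.Gamma_mul_Gamma_add_half (13/12)
  have d2 := Real.Gamma_mul_Gamma_add_half (1/4)
  have d3 := Real.Gamma_mul_Gamma_add_half (1/6)
  have d4 := Real.Gamma_mul_Gamma_one_sub (1/3)
  have s1 := Real.Gamma_add_one (s := 1/3) (by norm_num)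
  have s2 := Real.Gamma_add_one (s := 1/6) (by norm_num)
  have s3 := Real.Gamma_add_one (s := 7/6) (by norm_num)
  have hs : Real.sin (Real.pi * (1/3)) = √3 / 2 := by rw [← Real.sin_pi_div_three]; ring_nf
  rw [hs] at d4
  have hh := Real.Gamma_one_half_eq
  norm_num at d1 d2 d3 d4 s1 s2 s3 hh
  have e0 : (-5/6:ℝ) = -(5/6) := by norm_num
  rw [e0]
  have hABC : (2:ℝ)^(1/2:ℝ) = 2 * ((2:ℝ)^(-(7/6):ℝ) * (2:ℝ)^(2/3:ℝ)) := by
    rw [← Real.rpow_add two_pos]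
    have := Real.rpow_add (two_pos (α := ℝ)) 1 (-(7/6) + 2/3)
    rw [Real.rpow_one] at this
    rw [← this]; norm_num
  rw [d1, d2, s3, s2, s1, hh, hABC] at h
  have pA : (0:ℝ) < (2:ℝ)^(-(7/6):ℝ) := by positivity
  have pC : (0:ℝ) < (2:ℝ)^(2/3:ℝ) := by positivity
  have p1 : 0 < Real.Gamma (1/3) := Real.Gamma_pos_of_pos (by norm_num)
  have p2 : 0 < Real.Gamma (2/3) := Real.Gamma_pos_of_pos (by norm_num)
  have p6 : 0 < Real.Gamma (1/6) := Real.Gamma_pos_of_pos (by norm_num)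
  have ps : 0 < √Real.pi := Real.sqrt_pos.2 Real.pi_pos
  have hpi : Real.pi = √Real.pi ^ 2 := (Real.sq_sqrt Real.pi_pos.le).symm
  have pq : 0 < √(3:ℝ) := by positivity
  have hq : √(3:ℝ)^2 = 3 := Real.sq_sqrt (by norm_num)
  have d4' : Real.Gamma (2/3) = √Real.pi ^ 2 / (√3 / 2) / Real.Gamma (1/3) := by
    rw [eq_div_iff p1.ne', ← hpi, mul_comm]; exact d4
  have d3' : Real.Gamma (1/6) = Real.Gamma (1/3) * 2 ^ (2/3:ℝ) * √Real.pi / Real.Gamma (2/3) := by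
    rw [eq_div_iff p2.ne']; exact d3
  rw [d3', d4'] at h
  clear d1 d2 d3 d4 d3' d4' s1 s2 s3 hh hs hpi hABC p2 p6
  generalize (2:ℝ)^(-(7/6):ℝ) = A at *
  generalize (2:ℝ)^(2/3:ℝ) = C at *
  generalize Real.Gamma (1/3) = g at *
  generalize √Real.pi = p at *
  generalize √(3:ℝ) = q at *
  generalize auxS (-(5/6)) = S at *
  field_simp at h
  apply mul_left_cancel₀ pq.ne'
  linear_combination -h/9 - 16/3 * hq

theorem stmt_2 :
    16 * Real.sqrt 3 / 3 =
      ∑' k : ℕ, (1/4 : ℝ) ^ k * (risingFactorial (1/2) k * risingFactorial (5/6) k * risingFactorial (7/6) k) /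
        (risingFactorial (1) k * risingFactorial (4/3) k * risingFactorial (4/3) k) * (18 * (k:ℝ) + 7) := by
  rw [← aux_main]
  unfold auxS
  refine tsum_congr fun k => ?_
  unfold auxP
  have e1 : (-(-5/6) : ℝ) = 5/6 := by norm_num
  have e2 : (13/6 + 2 * (-5/6) : ℝ) = 1/2 := by norm_num
  rw [e1, e2]
  have h0 := aux_rf_pos (show (0:ℝ) < 1/2 by norm_num) k
  have h1 := aux_rf_pos one_pos k
  have h2 := aux_rf_pos (show (0:ℝ) < 4/3 by norm_num) k
  field_simp
end
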